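/- arXiv:2212.05127 — 7 statements merged into one kernel-verified Lean document; each statement's English description precedes it below -/
import Mathlib

section
/- The function t ↦ ∫_0^X ½ u(t,x)² dx is constant on ℝ; that is, solutions of the linear Korteweg–de Vries equation conserve momentum. -/
open intervalIntegral

/-!
Pairing the equation with `u` gives `d/dt ∫ ½ u² = ∫ u u_t = -∫ u u_x - ∫ u u_xxx`. Integration by
parts over a period makes `∂_x` skew-adjoint, so `∫ u u_x = 0`, and likewise
`∫ u u_xxx = -∫ u_x u_xx = 0`. For vector-valued `u`, read the products as inner products.
-/

open scoped RealInnerProductSpace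

section Periodic

variable {E : Type*} [NormedAddCommGroup E]

theorem periodic_deriv {𝕜 : Type*} [NontriviallyNormedField 𝕜] [NormedSpace 𝕜 E] {f : 𝕜 → E}
    {T : 𝕜} (hf : Function.Periodic f T) : Function.Periodic (deriv f) T := fun x => by
  rw [← deriv_comp_add_const, hf.funext]

theorem integral_deriv_eq_zero_of_periodic [NormedSpace ℝ E] [CompleteSpace E] {f : ℝ → E} {T : ℝ}
    (hf : ContDiff ℝ 1 f) (hfT : Function.Periodic f T) (a : ℝ) :
    ∫ x in a..a + T, deriv f x = 0 := by
  rw [integral_deriv_of_contDiffOn_uIcc hf.contDiffOn, hfT a, sub_self]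

variable [InnerProductSpace ℝ E] {f g : ℝ → E} {T : ℝ}

theorem integral_inner_deriv_eq_neg_of_periodic (hf : ContDiff ℝ 1 f) (hg : ContDiff ℝ 1 g)
    (hfT : Function.Periodic f T) (hgT : Function.Periodic g T) (a : ℝ) :
    ∫ x in a..a + T, ⟪f x, deriv g x⟫ = -∫ x in a..a + T, ⟪deriv f x, g x⟫ := by
  have product_rule (x : ℝ) :
      deriv (fun y => ⟪f y, g y⟫) x = ⟪f x, deriv g x⟫ + ⟪deriv f x, g x⟫ :=
    deriv_inner_apply ℝ (hf.differentiable one_ne_zero x) (hg.differentiable one_ne_zero x)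
  have inner_periodic : Function.Periodic (fun x => ⟪f x, g x⟫) T := fun x => by
    simp only [hfT x, hgT x]
  have integral_eq_zero := integral_deriv_eq_zero_of_periodic (hf.inner ℝ hg) inner_periodic a
  have hf' := hf.continuous_deriv_one
  have hg' := hg.continuous_deriv_one
  simp only [product_rule] at integral_eq_zero
  rwa [integral_add ((hf.continuous.inner hg').intervalIntegrable _ _)
    ((hf'.inner hg.continuous).intervalIntegrable _ _), ← eq_neg_iff_add_eq_zero]
    at integral_eq_zero

theorem integral_inner_deriv_self_of_periodic (hf : ContDiff ℝ 1 f)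
    (hfT : Function.Periodic f T) (a : ℝ) :
    ∫ x in a..a + T, ⟪f x, deriv f x⟫ = 0 := by
  have skew := integral_inner_deriv_eq_neg_of_periodic hf hf hfT hfT a
  simp only [real_inner_comm (f _) (deriv f _)] at skew
  exact self_eq_neg.mp skew

theorem integral_inner_deriv_deriv_deriv_of_periodic (hf : ContDiff ℝ 3 f)
    (hfT : Function.Periodic f T) (a : ℝ) :
    ∫ x in a..a + T, ⟪f x, deriv (deriv (deriv f)) x⟫ = 0 := by
  have hf' : ContDiff ℝ 2 (deriv f) := hf.deriv'
  have hf'' : ContDiff ℝ 1 (deriv (deriv f)) := hf'.deriv'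
  have hfT' := periodic_deriv hfT
  rw [integral_inner_deriv_eq_neg_of_periodic (hf.of_le (by norm_num)) hf'' hfT
    (periodic_deriv hfT') a,
    integral_inner_deriv_self_of_periodic (hf'.of_le (by norm_num)) hfT' a, neg_zero]

end Periodic

section ParameterDerivative

open MeasureTheory

theorem hasDerivAt_intervalIntegral_of_continuous {𝕜 E : Type*} [RCLike 𝕜] [NormedAddCommGroup E]
    [NormedSpace ℝ E] [NormedSpace 𝕜 E] {μ : Measure ℝ} [IsLocallyFiniteMeasure μ]
    {F F' : 𝕜 → ℝ → E} (hF : ∀ t, Continuous (F t)) (hF' : Continuous (Function.uncurry F'))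
    (hFF' : ∀ t x, HasDerivAt (fun s => F s x) (F' t x) t) (a b : ℝ) (t : 𝕜) :
    HasDerivAt (fun s => ∫ x in a..b, F s x ∂μ) (∫ x in a..b, F' t x ∂μ) t := by
  obtain ⟨C, hC⟩ := ((isCompact_closedBall t 1).prod (isCompact_uIcc (a := a) (b := b))
    ).exists_bound_of_continuousOn hF'.continuousOn
  have bound : ∀ x ∈ Set.uIoc a b, ∀ s ∈ Metric.closedBall t 1, ‖F' s x‖ ≤ C :=
    fun x hx s hs => hC (s, x) ⟨hs, Set.uIoc_subset_uIcc hx⟩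
  exact (hasDerivAt_integral_of_dominated_loc_of_deriv_le
    (Metric.closedBall_mem_nhds t one_pos)
    (.of_forall fun s => (hF s).aestronglyMeasurable)
    ((hF t).intervalIntegrable a b)
    (hF'.uncurry_left t).aestronglyMeasurable
    (.of_forall bound)
    intervalIntegrable_const
    (.of_forall fun x _ s _ => hFF' s x)).2

theorem hasDerivAt_comp_prodMk_left {𝕜 E F : Type*} [NontriviallyNormedField 𝕜]
    [NormedAddCommGroup E] [NormedSpace 𝕜 E] [NormedAddCommGroup F] [NormedSpace 𝕜 F]
    {u : 𝕜 × E → F} {t : 𝕜} {x : E} (hu : DifferentiableAt 𝕜 u (t, x)) :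
    HasDerivAt (fun s => u (s, x)) (fderiv 𝕜 u (t, x) (1, 0)) t :=
  hu.hasFDerivAt.comp_hasDerivAt t ((hasDerivAt_id t).prodMk (hasDerivAt_const t x))

theorem hasDerivAt_integral_half_norm_sq {E : Type*} [NormedAddCommGroup E]
    [InnerProductSpace ℝ E] {u : ℝ × ℝ → E} (hu : ContDiff ℝ 1 u) (a b t : ℝ) :
    HasDerivAt (fun s => ∫ x in a..b, (1 / 2) * ‖u (s, x)‖ ^ 2)
      (∫ x in a..b, ⟪u (t, x), deriv (fun s => u (s, x)) t⟫) t := by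
  have hu_t (t x : ℝ) : HasDerivAt (fun s => u (s, x)) (fderiv ℝ u (t, x) (1, 0)) t :=
    hasDerivAt_comp_prodMk_left (hu.differentiable one_ne_zero (t, x))
  have continuous_inner : Continuous fun p : ℝ × ℝ => ⟪u p, fderiv ℝ u p (1, 0)⟫ :=
    hu.continuous.inner ((hu.continuous_fderiv one_ne_zero).clm_apply continuous_const)
  have continuous_slice (s : ℝ) : Continuous fun x => (1 / 2) * ‖u (s, x)‖ ^ 2 := by
    have := hu.continuous
    fun_prop
  simp only [(hu_t _ _).deriv]
  refine hasDerivAt_intervalIntegral_of_continuous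
    (F' := fun s x => ⟪u (s, x), fderiv ℝ u (s, x) (1, 0)⟫)
    continuous_slice continuous_inner (fun t x => ?_) a b t
  exact ((hu_t t x).norm_sq.const_mul (1 / 2)).congr_deriv (by ring)

end ParameterDerivative

theorem lkdv_momentum_conservation_general {E : Type*} [NormedAddCommGroup E]
    [InnerProductSpace ℝ E] {X : ℝ} {u : ℝ × ℝ → E} (hu : ContDiff ℝ 1 u)
    (hux : ∀ t, ContDiff ℝ 3 fun x => u (t, x))
    (hper : ∀ t, Function.Periodic (fun x => u (t, x)) X)
    (hpde : ∀ t x : ℝ,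
      deriv (fun s => u (s, x)) t
        + deriv (fun y => u (t, y)) x
        + deriv (deriv (deriv fun y => u (t, y))) x = 0) (a t₁ t₂ : ℝ) :
    (∫ x in a..a + X, (1 / 2) * ‖u (t₁, x)‖ ^ 2)
      = ∫ x in a..a + X, (1 / 2) * ‖u (t₂, x)‖ ^ 2 := by
  have hasDerivAt_momentum := hasDerivAt_integral_half_norm_sq hu a (a + X)
  refine is_const_of_deriv_eq_zero (fun t => (hasDerivAt_momentum t).differentiableAt)
    (fun t => (hasDerivAt_momentum t).deriv.trans ?_) t₁ t₂
  set f : ℝ → E := fun x => u (t, x)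
  have hf : ContDiff ℝ 3 f := hux t
  have hf' : ContDiff ℝ 2 (deriv f) := hf.deriv'
  have hf'' : ContDiff ℝ 1 (deriv (deriv f)) := hf'.deriv'
  have u_t_eq (x : ℝ) :
      deriv (fun s => u (s, x)) t = -(deriv f x + deriv (deriv (deriv f)) x) :=
    eq_neg_of_add_eq_zero_left (by rw [← add_assoc]; exact hpde t x)
  calc ∫ x in a..a + X, ⟪f x, deriv (fun s => u (s, x)) t⟫
      = -∫ x in a..a + X, (⟪f x, deriv f x⟫ + ⟪f x, deriv (deriv (deriv f)) x⟫) := by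
        simp only [u_t_eq, inner_neg_right, inner_add_right, integral_neg]
    _ = -((∫ x in a..a + X, ⟪f x, deriv f x⟫)
          + ∫ x in a..a + X, ⟪f x, deriv (deriv (deriv f)) x⟫) := by
        rw [integral_add ((hf.continuous.inner hf'.continuous).intervalIntegrable _ _)
          ((hf.continuous.inner hf''.continuous_deriv_one).intervalIntegrable _ _)]
    _ = 0 := by
        rw [integral_inner_deriv_self_of_periodic (hf.of_le (by norm_num)) (hper t) a,
          integral_inner_deriv_deriv_deriv_of_periodic hf (hper t) a, add_zero, neg_zero]

/-- Solutions of the linear KdV equation `u_t + u_x + u_xxx = 0`, smooth and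
`X`-periodic in space, conserve momentum: `t ↦ ∫_0^X ½ u(t,x)² dx` is constant. -/
theorem lkdv_momentum_conservation
    (X : ℝ) (hX : 0 < X) (u : ℝ × ℝ → ℝ)
    (hu : ContDiff ℝ (⊤ : ℕ∞) u)
    (hper : ∀ t x : ℝ, u (t, x + X) = u (t, x))
    (hpde : ∀ t x : ℝ,
      deriv (fun s => u (s, x)) t
        + deriv (fun y => u (t, y)) x
        + deriv (fun y => deriv (fun y' => deriv (fun y'' => u (t, y'')) y') y) x = 0) :
    ∀ t₁ t₂ : ℝ,
      (∫ x in (0:ℝ)..X, (1/2) * (u (t₁, x))^2)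
        = ∫ x in (0:ℝ)..X, (1/2) * (u (t₂, x))^2 := by
  have hux (t : ℝ) : ContDiff ℝ 3 fun x => u (t, x) :=
    (contDiff_infty.mp hu 3).comp (contDiff_prodMk_right t)
  simpa only [zero_add, Real.norm_eq_abs, sq_abs] using
    lkdv_momentum_conservation_general (contDiff_infty.mp hu 1) hux hper hpde 0
end

section
/- If additionally e ∈ H satisfies G e = 0, then ⟨e, u⁺⟩ = ⟨e, u⟩; that is, the Crank–Nicolson discretisation of the linear KdV system conserves the discrete mass functional determined by any element annihilated by G. -/
open RealInnerProductSpace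

section SkewAdjoint

open scoped InnerProductSpace

variable {𝕜 H : Type*} [RCLike 𝕜] [SeminormedAddCommGroup H] [InnerProductSpace 𝕜 H] {G : H → H}

theorem inner_apply_right_eq_zero_of_apply_eq_zero (hG : ∀ x y : H, ⟪G x, y⟫_𝕜 = -⟪x, G y⟫_𝕜)
    {e : H} (he : G e = 0) (v : H) : ⟪e, G v⟫_𝕜 = 0 := by
  rw [← neg_eq_zero, ← hG, he, inner_zero_left]

theorem cn_lkdv_mass_general (hG : ∀ x y : H, ⟪G x, y⟫_𝕜 = -⟪x, G y⟫_𝕜)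
    {τ : 𝕜} {u u' v : H} (hstep : u' - u + τ • G v = 0) {e : H} (he : G e = 0) :
    ⟪e, u'⟫_𝕜 = ⟪e, u⟫_𝕜 := by
  have inner_increment_eq_zero : ⟪e, u' - u⟫_𝕜 = 0 := by
    rw [eq_neg_of_add_eq_zero_left hstep, inner_neg_right, inner_smul_right,
      inner_apply_right_eq_zero_of_apply_eq_zero hG he, mul_zero, neg_zero]
  rwa [inner_sub_right, sub_eq_zero] at inner_increment_eq_zero

end SkewAdjoint

/-- The Crank–Nicolson discretisation of the first-order-system form of the
linear KdV equation conserves the discrete mass functional determined by any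
element annihilated by the skew-adjoint operator `G`.  Here `u'`, `w'` denote
the new iterates `u⁺`, `w⁺`. -/
theorem cn_lkdv_mass
    {H : Type*} [NormedAddCommGroup H] [InnerProductSpace ℝ H]
    (G : H →ₗ[ℝ] H)
    (hG : ∀ x y : H, ⟪G x, y⟫ = -⟪x, G y⟫)
    (τ : ℝ) (u u' v w w' : H)
    (h1 : u' - u + τ • G v = 0)
    (h2 : v = (1/2 : ℝ) • (u + u') + G ((1/2 : ℝ) • (w + w')))
    (h3 : w = G u) (h4 : w' = G u')
    (e : H) (he : G e = 0) :
    ⟪e, u'⟫ = ⟪e, u⟫ :=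
  cn_lkdv_mass_general hG h1 he
end

section
/- ‖u⁺‖ = ‖u‖; that is, the Crank–Nicolson discretisation of the linear KdV system exactly conserves the discrete momentum ½‖u‖². -/
open RealInnerProductSpace

/-!
Eliminating `v` and `w` turns the scheme into the Crank–Nicolson scheme for `u̇ + A u = 0` with
`A = G + G³`, and `A` is again skew-adjoint, because odd powers of a skew-adjoint operator are. Let
`B` be a symmetric bilinear form, such as the inner product. Pairing `u⁺ - u = -τ A m`, where
`m = ½ (u + u⁺)`, with `u⁺ + u = 2 m` gives `B(u⁺, u⁺) - B(u, u) = -2 τ B(A m, m) = 0`.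
-/

/-- `x'` is obtained from `x` by one step, of size `τ`, of the Crank–Nicolson (implicit midpoint)
scheme for the evolution equation `ẋ + A x = 0`. The operator acts on `midpoint R x x'`, which is
`½ (x + x')`. -/
def IsCrankNicolsonStep {R M : Type*} [CommRing R] [Invertible (2 : R)] [AddCommGroup M]
    [Module R M] (A : Module.End R M) (τ : R) (x x' : M) : Prop :=
  x' - x + τ • A (midpoint R x x') = 0

theorem isAdjointPair_pow {R M N : Type*} [CommSemiring R] [AddCommMonoid M] [Module R M]
    [AddCommMonoid N] [Module R N] {I : R →+* R} {B : M →ₗ[R] M →ₛₗ[I] N} {f g : Module.End R M}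
    (h : LinearMap.IsAdjointPair B B f g) (n : ℕ) :
    LinearMap.IsAdjointPair B B (f ^ n : Module.End R M) (g ^ n : Module.End R M) := by
  induction n with
  | zero => exact LinearMap.isAdjointPair_one
  | succ n ih =>
    rw [pow_succ, pow_succ']
    exact ih.mul h

theorem isSkewAdjoint_pow_of_odd {R M N : Type*} [CommRing R] [AddCommGroup M] [Module R M]
    [AddCommGroup N] [Module R N] {B : M →ₗ[R] M →ₗ[R] N} {f : Module.End R M}
    (hf : B.IsSkewAdjoint f) {n : ℕ} (hn : Odd n) :
    B.IsSkewAdjoint (f ^ n : Module.End R M) := by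
  have hpow := isAdjointPair_pow (g := -f) hf n
  rwa [hn.neg_pow] at hpow

section SymmetricForm

variable {R M : Type*} [CommRing R] [AddCommGroup M] [Module R M] {B : LinearMap.BilinForm R M}

theorem apply_apply_self_eq_zero_of_isSkewAdjoint (hB : B.IsSymm) (h2 : IsLeftRegular (2 : R))
    {f : M → M} (hf : B.IsSkewAdjoint f) (x : M) : B (f x) x = 0 := by
  have hneg : B (f x) x = -B (f x) x := by
    calc B (f x) x = B x (-f x) := hf x x
      _ = -B (f x) x := by rw [map_neg, hB.eq]
  refine h2 ?_
  linear_combination hneg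

theorem apply_sub_add_eq_sub (hB : B.IsSymm) (x y : M) :
    B (x - y) (x + y) = B x x - B y y := by
  simp only [map_add, map_sub, LinearMap.sub_apply, hB.eq y x]
  ring

theorem IsCrankNicolsonStep.apply_self_eq [Invertible (2 : R)] (hB : B.IsSymm)
    {A : Module.End R M} (hA : B.IsSkewAdjoint A) {τ : R} {x x' : M}
    (h : IsCrankNicolsonStep A τ x x') : B x' x' = B x x := by
  have hsub : x' - x = -(τ • A (midpoint R x x')) := eq_neg_of_add_eq_zero_left h
  have hadd : x' + x = (2 : R) • midpoint R x x' := by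
    rw [midpoint_eq_smul_add, smul_invOf_smul, add_comm]
  have horth : B (A (midpoint R x x')) (midpoint R x x') = 0 :=
    apply_apply_self_eq_zero_of_isSkewAdjoint hB (isUnit_of_invertible 2).isRegular.left hA _
  rw [← sub_eq_zero, ← apply_sub_add_eq_sub hB, hsub, hadd]
  simp [horth]

theorem isCrankNicolsonStep_add_pow_three [Invertible (2 : R)] {G : Module.End R M} {τ : R}
    {u u' v w w' : M} (hu : u' - u + τ • G v = 0)
    (hv : v = midpoint R u u' + G (midpoint R w w')) (hw : w = G u) (hw' : w' = G u') :
    IsCrankNicolsonStep (G + G ^ 3) τ u u' := by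
  have hmid : midpoint R w w' = G (midpoint R u u') := by
    simp only [hw, hw', midpoint_eq_smul_add, map_smul, map_add]
  have hGv : G v = (G + G ^ 3) (midpoint R u u') := by
    rw [hv, hmid, map_add]
    rfl
  rwa [IsCrankNicolsonStep, ← hGv]

theorem cn_lkdv_momentum_general [Invertible (2 : R)] (hB : B.IsSymm) {G : Module.End R M}
    (hG : B.IsSkewAdjoint G) {τ : R} {u u' v w w' : M} (hu : u' - u + τ • G v = 0)
    (hv : v = midpoint R u u' + G (midpoint R w w')) (hw : w = G u) (hw' : w' = G u') :
    B u' u' = B u u := by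
  have hA : G + G ^ 3 ∈ B.skewAdjointSubmodule :=
    add_mem (B.mem_skewAdjointSubmodule G |>.mpr hG)
      (B.mem_skewAdjointSubmodule _ |>.mpr (isSkewAdjoint_pow_of_odd hG (by decide)))
  exact (isCrankNicolsonStep_add_pow_three hu hv hw hw').apply_self_eq hB
    ((B.mem_skewAdjointSubmodule _).mp hA)

end SymmetricForm

/-- The Crank–Nicolson discretisation of the first-order-system form of the
linear KdV equation exactly conserves the discrete momentum `½‖u‖²`:
`‖u⁺‖ = ‖u‖`.  Here `u'`, `w'` denote the new iterates `u⁺`, `w⁺`. -/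
theorem cn_lkdv_momentum
    {H : Type*} [NormedAddCommGroup H] [InnerProductSpace ℝ H]
    (G : H →ₗ[ℝ] H)
    (hG : ∀ x y : H, ⟪G x, y⟫ = -⟪x, G y⟫)
    (τ : ℝ) (u u' v w w' : H)
    (h1 : u' - u + τ • G v = 0)
    (h2 : v = (1/2 : ℝ) • (u + u') + G ((1/2 : ℝ) • (w + w')))
    (h3 : w = G u) (h4 : w' = G u') :
    ‖u'‖ = ‖u‖ := by
  have hnorm : innerₗ H u' u' = innerₗ H u u :=
    cn_lkdv_momentum_general ⟨isSymm_inner.eq⟩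
      (fun x y ↦ (hG x y).trans (inner_neg_right x (G y)).symm) h1
      (by simpa [midpoint_eq_smul_add] using h2) h3 h4
  simpa using hnorm
end

section
/- ‖w⁺‖² − ‖u⁺‖² = ‖w‖² − ‖u‖²; that is, the Crank–Nicolson discretisation of the linear KdV system exactly conserves the discrete energy ½(‖w‖² − ‖u‖²). -/
open RealInnerProductSpace

/-!
Crank–Nicolson evaluates the gradient `u + G (G u)` of the energy `½(‖u‖² - ‖G u‖²)` at the midpoint
of `u` and `u'`. The energy is quadratic, so pairing this midpoint gradient `v` with `u' - u` gives
exactly the energy increment. The scheme makes `u' - u` a multiple of `G v`, which is orthogonal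
to `v` because `G` is skew-adjoint.
-/

section SkewAdjoint

variable {H : Type*} [SeminormedAddCommGroup H] [InnerProductSpace ℝ H]

theorem real_inner_sub_half_smul_add (x y : H) :
    ⟪y - x, (1 / 2 : ℝ) • (x + y)⟫ = 1 / 2 * (‖y‖ ^ 2 - ‖x‖ ^ 2) := by
  rw [real_inner_smul_right, inner_sub_left, inner_add_right, inner_add_right,
    real_inner_self_eq_norm_sq, real_inner_self_eq_norm_sq, real_inner_comm x y]
  ring

theorem real_inner_apply_self_eq_zero_of_skewAdjoint
    {G : H → H} (hG : ∀ x y : H, ⟪G x, y⟫ = -⟪x, G y⟫) (x : H) :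
    ⟪G x, x⟫ = 0 :=
  self_eq_neg.mp ((hG x x).trans (congrArg Neg.neg (real_inner_comm (G x) x)))

theorem real_inner_sub_apply_of_skewAdjoint
    {G : H → H} (hG : ∀ x y : H, ⟪G x, y⟫ = -⟪x, G y⟫) (x y z : H) :
    ⟪y - x, G z⟫ = -⟪G y - G x, z⟫ := by
  rw [inner_sub_left, inner_sub_left, hG, hG]
  ring

theorem real_inner_sub_midpoint_gradient_of_skewAdjoint
    {G : H → H} (hG : ∀ x y : H, ⟪G x, y⟫ = -⟪x, G y⟫) (x y : H) :
    ⟪y - x, (1 / 2 : ℝ) • (x + y) + G ((1 / 2 : ℝ) • (G x + G y))⟫ =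
      1 / 2 * ((‖y‖ ^ 2 - ‖G y‖ ^ 2) - (‖x‖ ^ 2 - ‖G x‖ ^ 2)) := by
  rw [inner_add_right, real_inner_sub_apply_of_skewAdjoint hG,
    real_inner_sub_half_smul_add, real_inner_sub_half_smul_add]
  ring

end SkewAdjoint

theorem cn_lkdv_energy_general
    {H : Type*} [SeminormedAddCommGroup H] [InnerProductSpace ℝ H]
    (G : H → H)
    (hG : ∀ x y : H, ⟪G x, y⟫ = -⟪x, G y⟫)
    (τ : ℝ) (u u' v w w' : H)
    (hstep : u' - u + τ • G v = 0)
    (hv : v = (1 / 2 : ℝ) • (u + u') + G ((1 / 2 : ℝ) • (w + w')))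
    (hw : w = G u) (hw' : w' = G u') :
    ‖w'‖ ^ 2 - ‖u'‖ ^ 2 = ‖w‖ ^ 2 - ‖u‖ ^ 2 := by
  have horth : ⟪u' - u, v⟫ = 0 := by
    rw [eq_neg_of_add_eq_zero_left hstep, inner_neg_left, real_inner_smul_left,
      real_inner_apply_self_eq_zero_of_skewAdjoint hG, mul_zero, neg_zero]
  have hincr : ⟪u' - u, v⟫ = 1 / 2 * ((‖u'‖ ^ 2 - ‖w'‖ ^ 2) - (‖u‖ ^ 2 - ‖w‖ ^ 2)) := by
    rw [hv, hw, hw', real_inner_sub_midpoint_gradient_of_skewAdjoint hG]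
  linarith

/-- The Crank–Nicolson discretisation of the first-order-system form of the
linear KdV equation exactly conserves the discrete energy `½(‖w‖² − ‖u‖²)`:
`‖w⁺‖² − ‖u⁺‖² = ‖w‖² − ‖u‖²`.  Here `u'`, `w'` denote the new iterates. -/
theorem cn_lkdv_energy
    {H : Type*} [NormedAddCommGroup H] [InnerProductSpace ℝ H]
    (G : H →ₗ[ℝ] H)
    (hG : ∀ x y : H, ⟪G x, y⟫ = -⟪x, G y⟫)
    (τ : ℝ) (u u' v w w' : H)
    (h1 : u' - u + τ • G v = 0)
    (h2 : v = (1/2 : ℝ) • (u + u') + G ((1/2 : ℝ) • (w + w')))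
    (h3 : w = G u) (h4 : w' = G u') :
    ‖w'‖^2 - ‖u'‖^2 = ‖w‖^2 - ‖u‖^2 :=
  cn_lkdv_energy_general G hG τ u u' v w w' h1 h2 h3 h4
end

section
/- ‖U⁺‖² + c² ‖Ρ⁺‖² = ‖U‖² + c² ‖Ρ‖²; that is, the Crank–Nicolson discretisation of the linear rotating shallow water equations exactly conserves the discrete energy ½(‖U‖² + c²‖Ρ‖²). -/
open RealInnerProductSpace

/- Pairing an increment with the midpoint of its endpoints gives half the increment of the squared
norm. Testing the momentum equation with the midpoint velocity, the Coriolis term drops out by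
skewness; testing the continuity equation with the midpoint pressure, adjointness shows that the two
remaining pressure–velocity terms are opposite up to the weight `c²`, so they cancel in the weighted
energy. -/

section MidpointBalance

variable {E : Type*} [SeminormedAddCommGroup E] [InnerProductSpace ℝ E]

theorem two_mul_inner_sub_midpoint (x y : E) :
    2 * ⟪y - x, midpoint ℝ x y⟫ = ‖y‖ ^ 2 - ‖x‖ ^ 2 := by
  rw [midpoint_eq_smul_add, invOf_eq_inv, real_inner_smul_right, add_comm x y, inner_sub_left,
    inner_add_right, inner_add_right, real_inner_self_eq_norm_sq, real_inner_self_eq_norm_sq,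
    real_inner_comm y x]
  ring

theorem norm_sq_sub_norm_sq_of_midpoint_step {x y g : E} (h : y - x + g = 0) :
    ‖y‖ ^ 2 - ‖x‖ ^ 2 = -2 * ⟪g, midpoint ℝ x y⟫ := by
  rw [← two_mul_inner_sub_midpoint, eq_neg_of_add_eq_zero_left h, inner_neg_left,
    mul_neg, neg_mul]

theorem norm_sq_sub_norm_sq_of_skew_midpoint_step {J : E → E} (hJ : ∀ u, ⟪J u, u⟫ = 0)
    {a : ℝ} {x y g : E} (h : y - x + a • J (midpoint ℝ x y) - g = 0) :
    ‖y‖ ^ 2 - ‖x‖ ^ 2 = 2 * ⟪g, midpoint ℝ x y⟫ := by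
  rw [add_sub_assoc] at h
  rw [norm_sq_sub_norm_sq_of_midpoint_step h, inner_sub_left, real_inner_smul_left, hJ,
    mul_zero, zero_sub, neg_mul_neg]

end MidpointBalance

theorem cn_swe_energy_general
    {V Q : Type*} [SeminormedAddCommGroup V] [InnerProductSpace ℝ V]
    [SeminormedAddCommGroup Q] [InnerProductSpace ℝ Q]
    {D : V → Q} {Dstar : Q → V} (hadj : ∀ ρ φ, ⟪Dstar ρ, φ⟫ = ⟪ρ, D φ⟫)
    {J : V → V} (hJ : ∀ φ, ⟪J φ, φ⟫ = 0)
    {f κ τ : ℝ} {U U' : V} {P P' : Q}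
    (h1 : U' - U + (τ * f) • J (midpoint ℝ U U') - (τ * κ) • Dstar (midpoint ℝ P P') = 0)
    (h2 : P' - P + τ • D (midpoint ℝ U U') = 0) :
    ‖U'‖ ^ 2 + κ * ‖P'‖ ^ 2 = ‖U‖ ^ 2 + κ * ‖P‖ ^ 2 := by
  have kinetic : ‖U'‖ ^ 2 - ‖U‖ ^ 2 =
      2 * (τ * κ * ⟪midpoint ℝ P P', D (midpoint ℝ U U')⟫) := by
    rw [norm_sq_sub_norm_sq_of_skew_midpoint_step hJ h1, real_inner_smul_left, hadj]
  have potential : ‖P'‖ ^ 2 - ‖P‖ ^ 2 =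
      -2 * (τ * ⟪midpoint ℝ P P', D (midpoint ℝ U U')⟫) := by
    rw [norm_sq_sub_norm_sq_of_midpoint_step h2, real_inner_smul_left, real_inner_comm]
  linear_combination kinetic + κ * potential

/-- The Crank–Nicolson discretisation of the linear rotating shallow water
equations exactly conserves the discrete energy `½(‖U‖² + c²‖Ρ‖²)`:
`‖U⁺‖² + c²‖Ρ⁺‖² = ‖U‖² + c²‖Ρ‖²`.  Here `U'`, `P'` denote the new iterates,
`Dstar` denotes the adjoint `D*`, and `P` denotes the pressure `Ρ`. -/
theorem cn_swe_energy
    {V Q : Type*} [NormedAddCommGroup V] [InnerProductSpace ℝ V]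
    [NormedAddCommGroup Q] [InnerProductSpace ℝ Q]
    (D : V →ₗ[ℝ] Q) (Dstar : Q →ₗ[ℝ] V)
    (hadj : ∀ (ρ : Q) (φ : V), ⟪Dstar ρ, φ⟫ = ⟪ρ, D φ⟫)
    (J : V →ₗ[ℝ] V) (hJ : ∀ φ : V, ⟪J φ, φ⟫ = 0)
    (f c τ : ℝ) (U U' : V) (P P' : Q)
    (h1 : U' - U + (τ * f) • J ((1/2 : ℝ) • (U + U'))
            - (τ * c^2) • Dstar ((1/2 : ℝ) • (P + P')) = 0)
    (h2 : P' - P + τ • D ((1/2 : ℝ) • (U + U')) = 0) :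
    ‖U'‖^2 + c^2 * ‖P'‖^2 = ‖U‖^2 + c^2 * ‖P‖^2 := by
  simp only [one_div, ← invOf_eq_inv, ← midpoint_eq_smul_add] at h1 h2
  exact cn_swe_energy_general hadj hJ h1 h2
end

section
/- For every k ∈ ℕ, ωᵀ (Aᵏ r₀) = 0, and consequently every vector x in the affine Krylov space x₀ + span{r₀, A r₀, A² r₀, …} satisfies ωᵀ x = m. In particular, every iterate of unpreconditioned GMRES with initial guess x₀ exactly preserves the linear invariant ωᵀ x = m. -/
open Matrix

/-!
The left eigenvector equation says that the functional `φ = ωᵀ` intertwines `A` with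
multiplication by `γ`, that is `φ ∘ A = γ φ`. So `ker φ` is `A`-invariant, and it contains `r₀`
because `φ r₀ = φ f - γ φ x₀ = γ m - γ m`; hence it contains the whole Krylov space of `r₀`, and
`φ` is constant on `x₀ + span {r₀, A r₀, …}`. For several coupled invariants, `φ` takes values
in a module and an endomorphism `S` with `φ ∘ A = S ∘ φ` replaces `γ`.
-/

section Krylov

variable {R M N : Type*} [Semiring R] [AddCommMonoid M] [Module R M] [AddCommMonoid N] [Module R N]

/-- The (full) Krylov subspace of an endomorphism `T` and a vector `v`, spanned by the orbit
`v, T v, T² v, …`; the iterates of a Krylov method differ from the initial guess by its elements. -/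
def krylovSubspace (T : Module.End R M) (v : M) : Submodule R M :=
  Submodule.span R (Set.range fun k : ℕ => (T ^ k) v)

theorem pow_apply_mem_krylovSubspace (T : Module.End R M) (v : M) (k : ℕ) :
    (T ^ k) v ∈ krylovSubspace T v :=
  Submodule.subset_span ⟨k, rfl⟩

theorem krylovSubspace_le {T : Module.End R M} {v : M} {p : Submodule R M}
    (hp : p ∈ T.invtSubmodule) (hv : v ∈ p) : krylovSubspace T v ≤ p := by
  refine Submodule.span_le.2 (Set.range_subset_iff.2 fun k => ?_)
  rw [Module.End.pow_apply]
  exact (T.mem_invtSubmodule_iff_mapsTo.1 hp).iterate k hv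

theorem ker_mem_invtSubmodule_of_comp_eq {φ : M →ₗ[R] N} {T : Module.End R M} {S : Module.End R N}
    (h : φ ∘ₗ T = S ∘ₗ φ) : φ.ker ∈ T.invtSubmodule := by
  intro x hx
  calc φ (T x) = S (φ x) := LinearMap.congr_fun h x
    _ = 0 := by rw [LinearMap.mem_ker.1 hx, map_zero]

end Krylov

section Matrix

variable {R ι : Type*} [CommSemiring R] [Fintype ι] [DecidableEq ι]

theorem krylovSubspace_toLin' (A : Matrix ι ι R) (v : ι → R) :
    krylovSubspace A.toLin' v = Submodule.span R (Set.range fun k : ℕ => (A ^ k) *ᵥ v) := by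
  simp only [krylovSubspace, ← Matrix.toLin'_pow, Matrix.toLin'_apply]

theorem dotProductBilin_comp_toLin'_of_transpose_mulVec_eq_smul {A : Matrix ι ι R} {ω : ι → R}
    {γ : R} (h : Aᵀ *ᵥ ω = γ • ω) :
    dotProductBilin R R ω ∘ₗ A.toLin' = LinearMap.lsmul R R γ ∘ₗ dotProductBilin R R ω := by
  refine LinearMap.ext fun v => ?_
  calc ω ⬝ᵥ A *ᵥ v = (Aᵀ *ᵥ ω) ⬝ᵥ v := by rw [dotProduct_mulVec, mulVec_transpose]
    _ = γ • (ω ⬝ᵥ v) := by rw [h, smul_dotProduct]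

end Matrix

theorem gmres_linear_invariant_general {R M N : Type*} [Ring R] [AddCommGroup M] [Module R M]
    [AddCommGroup N] [Module R N] {T : Module.End R M} {φ : M →ₗ[R] N} {S : Module.End R N}
    {f x₀ r₀ : M} {m : N} (hφ : φ ∘ₗ T = S ∘ₗ φ) (hf : φ f = S m) (hx₀ : φ x₀ = m)
    (hr : r₀ = f - T x₀) :
    (∀ k : ℕ, φ ((T ^ k) r₀) = 0) ∧ ∀ x : M, x - x₀ ∈ krylovSubspace T r₀ → φ x = m := by
  have residual_mem_ker : r₀ ∈ φ.ker := by
    have map_image : φ (T x₀) = S m := hx₀ ▸ LinearMap.congr_fun hφ x₀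
    rw [LinearMap.mem_ker, hr, map_sub, hf, map_image, sub_self]
  have krylov_le_ker : krylovSubspace T r₀ ≤ φ.ker :=
    krylovSubspace_le (ker_mem_invtSubmodule_of_comp_eq hφ) residual_mem_ker
  refine ⟨fun k => krylov_le_ker (pow_apply_mem_krylovSubspace T r₀ k), fun x hx => ?_⟩
  rw [← hx₀]
  exact LinearMap.sub_mem_ker_iff.1 (krylov_le_ker hx)

/-- If `ω` is a left eigenvector of `A` with eigenvalue `γ`, `ωᵀ f = γ m` and
`ωᵀ x₀ = m`, then `ωᵀ Aᵏ r₀ = 0` for every `k`, and consequently every vector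
in the affine Krylov space `x₀ + span{r₀, A r₀, A² r₀, …}` satisfies
`ωᵀ x = m`.  In particular, every iterate of unpreconditioned GMRES with
initial guess `x₀` exactly preserves the linear invariant `ωᵀ x = m`. -/
theorem gmres_linear_invariant
    (n : ℕ) (hn : 1 ≤ n)
    (A : Matrix (Fin n) (Fin n) ℝ)
    (ω f x₀ : Fin n → ℝ) (γ m : ℝ)
    (hω : Aᵀ.mulVec ω = γ • ω)
    (hf : ω ⬝ᵥ f = γ * m)
    (hx₀ : ω ⬝ᵥ x₀ = m)
    (r₀ : Fin n → ℝ) (hr : r₀ = f - A.mulVec x₀) :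
    (∀ k : ℕ, ω ⬝ᵥ (A ^ k).mulVec r₀ = 0)
      ∧ (∀ x : Fin n → ℝ,
          x - x₀ ∈ Submodule.span ℝ
            (Set.range fun k : ℕ => (A ^ k).mulVec r₀) →
          ω ⬝ᵥ x = m) := by
  simpa only [krylovSubspace_toLin', ← Matrix.toLin'_pow, Matrix.toLin'_apply,
    dotProductBilin_apply_apply] using
    gmres_linear_invariant_general
      (dotProductBilin_comp_toLin'_of_transpose_mulVec_eq_smul hω) hf hx₀ hr
end

section
/- Suppose the Runge–Kutta coefficients satisfy the symplecticity condition b_i a_{ij} + b_j a_{ji} = b_i b_j for all 1 ≤ i, j ≤ s (as holds for the Gauss–Legendre methods), and suppose M is a symmetric real d × d matrix such that yᵀ M h(t', y) = 0 for all t' ∈ ℝ and y ∈ ℝ^d (so that z ↦ zᵀ M z is an invariant of z' = h(t, z)). Then (z⁺)ᵀ M z⁺ = zᵀ M z; that is, such Runge–Kutta methods exactly preserve all quadratic invariants. -/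
open Matrix

/-!
For a symmetric bilinear form `B`, symplecticity gives
`B(z⁺, z⁺) = B(z, z) + 2τ ∑ᵢ bᵢ B(Yᵢ, kᵢ)`, where `Yᵢ = z + τ ∑ⱼ aᵢⱼ kⱼ` is the point at which the
slope `kᵢ` is evaluated; this is the discrete form of `d/dt B(z, z) = 2 B(z, z')`. Invariance makes
every term `B(Yᵢ, kᵢ)` vanish.
-/

section BilinForm

variable {R V ι : Type*} [CommSemiring R] [Fintype ι]

/-- The condition `bᵢ aᵢⱼ + bⱼ aⱼᵢ = bᵢ bⱼ` on the matrix `a` and the weights `b` of a Butcher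
tableau that makes the Runge–Kutta method symplectic. -/
def IsSymplecticTableau (a : ι → ι → R) (b : ι → R) : Prop :=
  ∀ i j, b i * a i j + b j * a j i = b i * b j

namespace IsSymplecticTableau

variable [AddCommMonoid V] [Module R V] {a : ι → ι → R} {b : ι → R} {B : LinearMap.BilinForm R V}

theorem bilinForm_sum_smul_self (hab : IsSymplecticTableau a b) (hB : B.IsSymm) (k : ι → V) :
    B (∑ i, b i • k i) (∑ i, b i • k i) = 2 * ∑ i, b i * B (∑ j, a i j • k j) (k i) := by
  have swap : ∑ i, ∑ j, b j * a j i * B (k i) (k j) = ∑ i, ∑ j, b i * a i j * B (k i) (k j) := by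
    rw [Finset.sum_comm]
    simp only [hB.eq]
  calc B (∑ i, b i • k i) (∑ i, b i • k i)
      = ∑ i, ∑ j, b i * b j * B (k i) (k j) := by
        simp only [map_sum, map_smul, LinearMap.sum_apply, LinearMap.smul_apply, smul_eq_mul,
          Finset.mul_sum, mul_assoc, hB.eq]
    _ = ∑ i, ∑ j, (b i * a i j + b j * a j i) * B (k i) (k j) := by
        simp only [hab _ _]
    _ = 2 * ∑ i, ∑ j, b i * a i j * B (k i) (k j) := by
        simp only [add_mul, Finset.sum_add_distrib, swap, two_mul]
    _ = 2 * ∑ i, b i * B (∑ j, a i j • k j) (k i) := by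
        simp only [map_sum, map_smul, LinearMap.sum_apply, LinearMap.smul_apply, smul_eq_mul,
          Finset.mul_sum, mul_assoc, hB.eq]

theorem bilinForm_add_smul_sum_self (hab : IsSymplecticTableau a b) (hB : B.IsSymm) (τ : R) (z : V)
    (k : ι → V) :
    B (z + τ • ∑ i, b i • k i) (z + τ • ∑ i, b i • k i) =
      B z z + 2 * τ * ∑ i, b i * B (z + τ • ∑ j, a i j • k j) (k i) := by
  have stage_sum : ∑ i, b i * B (z + τ • ∑ j, a i j • k j) (k i) =
      B z (∑ i, b i • k i) + τ * ∑ i, b i * B (∑ j, a i j • k j) (k i) := by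
    simp only [map_add, LinearMap.add_apply, map_smul, LinearMap.smul_apply, smul_eq_mul,
      mul_add, Finset.sum_add_distrib, map_sum (B z), Finset.mul_sum, mul_left_comm τ]
  calc B (z + τ • ∑ i, b i • k i) (z + τ • ∑ i, b i • k i)
      = B z z + 2 * τ * B z (∑ i, b i • k i)
          + τ * τ * B (∑ i, b i • k i) (∑ i, b i • k i) := by
        simp only [map_add, map_smul, LinearMap.add_apply, LinearMap.smul_apply, smul_eq_mul,
          hB.eq _ z]
        ring
    _ = B z z + 2 * τ * ∑ i, b i * B (z + τ • ∑ j, a i j • k j) (k i) := by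
        rw [hab.bilinForm_sum_smul_self hB, stage_sum]
        ring

end IsSymplecticTableau

theorem symplectic_rk_preserves_quadratic_invariants_general
    [AddCommMonoid V] [Module R V] (τ : R) (h : R × V → V)
    (a : ι → ι → R) (b c : ι → R) (t : R) (z : V) (k : ι → V)
    (hk : ∀ i, k i = h (t + c i * τ, z + τ • ∑ j, a i j • k j))
    (hab : IsSymplecticTableau a b)
    (B : LinearMap.BilinForm R V) (hB : B.IsSymm) (hinv : ∀ t' y, B y (h (t', y)) = 0) :
    B (z + τ • ∑ i, b i • k i) (z + τ • ∑ i, b i • k i) = B z z := by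
  have stage_orthogonal (i : ι) : B (z + τ • ∑ j, a i j • k j) (k i) = 0 := by
    rw [hk i]
    exact hinv _ _
  simp only [hab.bilinForm_add_smul_sum_self hB, stage_orthogonal, mul_zero,
    Finset.sum_const_zero, add_zero]

end BilinForm

/-- A Runge–Kutta method whose coefficients satisfy the symplecticity
condition `b_i a_{ij} + b_j a_{ji} = b_i b_j` (as do the Gauss–Legendre
methods) exactly preserves all quadratic invariants: if `M` is symmetric and
`yᵀ M h(t', y) = 0` for all `t'`, `y`, then `(z⁺)ᵀ M z⁺ = zᵀ M z`. -/
theorem symplectic_rk_preserves_quadratic_invariants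
    (s d : ℕ) (hs : 1 ≤ s) (hd : 1 ≤ d) (τ : ℝ)
    (h : ℝ × (Fin d → ℝ) → Fin d → ℝ)
    (a : Fin s → Fin s → ℝ) (b : Fin s → ℝ) (c : Fin s → ℝ)
    (t : ℝ) (z : Fin d → ℝ)
    (k : Fin s → Fin d → ℝ)
    (hk : ∀ i : Fin s,
      k i = h (t + c i * τ, z + τ • ∑ j : Fin s, a i j • k j))
    (zp : Fin d → ℝ)
    (hzp : zp = z + τ • ∑ i : Fin s, b i • k i)
    (hsymplectic : ∀ i j : Fin s, b i * a i j + b j * a j i = b i * b j)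
    (M : Matrix (Fin d) (Fin d) ℝ) (hM : M.IsSymm)
    (hinv : ∀ (t' : ℝ) (y : Fin d → ℝ), y ⬝ᵥ M.mulVec (h (t', y)) = 0) :
    zp ⬝ᵥ M.mulVec zp = z ⬝ᵥ M.mulVec z := by
  simpa only [hzp, Matrix.toBilin'_apply'] using
    symplectic_rk_preserves_quadratic_invariants_general τ h a b c t z k hk hsymplectic
      M.toBilin' (Matrix.isSymm_toBilin'_iff_isSymm.mpr hM)
      fun t' y ↦ (Matrix.toBilin'_apply' M y (h (t', y))).trans (hinv t' y)
end
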